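/- Let ν be a real number with ν ≥ 1, and let 0 < a < b be two consecutive positive zeroes of J_{ν−1} (i.e. J_{ν−1}(a) = J_{ν−1}(b) = 0 and J_{ν−1}(z) ≠ 0 for all z with a < z < b). Then there exists exactly one z in the open interval (a, b) with J_{ν−1}(z) + J_ν(z) = 0. Conversely, if 0 < a < b are two consecutive positive zeroes of z ↦ J_{ν−1}(z) + J_ν(z), then there exists exactly one z in (a, b) with J_{ν−1}(z) = 0. -/

import Mathlib

/-- Bessel function of the first kind of real order `ν`, defined via its power series
`J_ν(z) = ∑ₘ (−1)^m / (m! Γ(ν+m+1)) (z/2)^(ν+2m)` (with real-exponent powers). -/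
noncomputable def besselJ (ν z : ℝ) : ℝ :=
  ∑' m : ℕ, ((-1 : ℝ) ^ m / (Nat.factorial m * Real.Gamma (ν + m + 1))) *
    (z / 2) ^ (ν + 2 * (m : ℝ))

/-- `x` (indexed by `k ≥ 1`) enumerates the positive zeroes of `f`: it is strictly
increasing on indices `k ≥ 1`, each `x k` is a positive zero of `f`, and every positive
zero of `f` is some `x k`. -/
def EnumPosZeros (f : ℝ → ℝ) (x : ℕ → ℝ) : Prop :=
  StrictMonoOn x (Set.Ici 1) ∧ (∀ k, 1 ≤ k → 0 < x k ∧ f (x k) = 0) ∧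
    ∀ z : ℝ, 0 < z → f z = 0 → ∃ k, 1 ≤ k ∧ x k = z

/-!
Write `μ = ν - 1`, `J = J_μ` and `K = J_{μ+1}`. The pairs `(J, J + K)` and `(J + K, -J)` have the
same Wronskian `J K' - J' K = J² + K² - (2μ + 1) / z * J K`. It is positive wherever `J = 0` or
`J + K = 0`, because `J` and `K` have no common positive zero and `0 ≤ 2μ + 1`.

A function whose derivative is positive at each of its zeros has at most one zero on an interval.
If `p` and `q` have positive Wronskian at the zeros of `p` and of `q`, this applies both to `q / p`
between consecutive zeros of `p`, so that `q` has at most one zero there, and to `-p / q`, which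
would have two zeros if `q` did not vanish in between.

A common zero of `J_μ` and `J_{μ+1}` would be a zero of every `J_{μ+n}`, by the three-term
recurrence, but a fixed positive number is not a zero of Bessel functions of large order.
-/

open Set Filter Topology
open scoped Nat

section Interlacing

variable {f f' p p' q q' : ℝ → ℝ} {s : Set ℝ} {a b : ℝ}

lemma subsingleton_zeros_of_deriv_pos (hs : s.OrdConnected)
    (hf : ∀ x ∈ s, HasDerivAt f (f' x) x) (hpos : ∀ x ∈ s, f x = 0 → 0 < f' x) :
    {x ∈ s | f x = 0}.Subsingleton := by
  rintro x ⟨hx, hfx⟩ y ⟨hy, hfy⟩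
  by_contra hxy
  wlog hlt : x < y generalizing x y
  · exact this hy hfy hx hfx (Ne.symm hxy) (lt_of_le_of_ne (not_lt.1 hlt) (Ne.symm hxy))
  have hIcc : Icc x y ⊆ s := hs.out hx hy
  have hnonneg : ∀ w ∈ Icc x y, -f w ≤ 0 := fun w hw ↦
    image_le_of_deriv_right_lt_deriv_boundary (B := fun _ ↦ 0) (B' := fun _ ↦ 0)
      (fun w hw ↦ (hf w (hIcc hw)).fun_neg.continuousAt.continuousWithinAt)
      (fun w hw ↦ (hf w (hIcc (Ico_subset_Icc_self hw))).fun_neg.hasDerivWithinAt)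
      (by simp [hfx]) (fun w ↦ hasDerivAt_const w 0)
      (fun w hw h ↦ neg_neg_of_pos (hpos w (hIcc (Ico_subset_Icc_self hw)) (neg_eq_zero.1 h))) hw
  have hsign : ∀ᶠ w in 𝓝 y, SignType.sign (f w) = SignType.sign (w - y) :=
    eventually_nhdsWithin_sign_eq_of_deriv_pos (by simpa [(hf y hy).deriv] using hpos y hy hfy) hfy
  obtain ⟨w, hsignw, hw⟩ :=
    ((hsign.filter_mono nhdsWithin_le_nhds).and (Ioo_mem_nhdsLT hlt)).exists
  rw [sign_neg (sub_neg.2 hw.2), sign_eq_neg_one_iff] at hsignw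
  linarith [hnonneg w (Ioo_subset_Icc_self hw)]

lemma exists_zero_of_wronskian_pos (hab : a < b)
    (hp : ∀ x ∈ Icc a b, HasDerivAt p (p' x) x) (hq : ∀ x ∈ Icc a b, HasDerivAt q (q' x) x)
    (hW : ∀ x ∈ Icc a b, p x = 0 → 0 < p x * q' x - p' x * q x)
    (ha : p a = 0) (hb : p b = 0) :
    ∃ x ∈ Ioo a b, q x = 0 := by
  by_contra! hne
  have hq0 : ∀ x ∈ Icc a b, q x ≠ 0 := by
    intro x hx hqx
    have hpx : p x = 0 := by
      rcases eq_endpoints_or_mem_Ioo_of_mem_Icc hx with rfl | rfl | hx'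
      exacts [ha, hb, absurd hqx (hne x hx')]
    simpa [hpx, hqx] using hW x hx hpx
  have hsub : {x ∈ Icc a b | -(p x / q x) = 0}.Subsingleton := by
    refine subsingleton_zeros_of_deriv_pos ordConnected_Icc
      (fun x hx ↦ ((hp x hx).fun_div (hq x hx) (hq0 x hx)).fun_neg) fun x hx h ↦ ?_
    have hpx : p x = 0 := by simpa [hq0 x hx] using h
    rw [← neg_div, neg_sub]
    exact div_pos (hW x hx hpx) (by have := hq0 x hx; positivity)
  exact hab.ne (hsub ⟨left_mem_Icc.2 hab.le, by simp [ha]⟩ ⟨right_mem_Icc.2 hab.le, by simp [hb]⟩)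

lemma subsingleton_zeros_of_wronskian_pos (hs : s.OrdConnected)
    (hp : ∀ x ∈ s, HasDerivAt p (p' x) x) (hq : ∀ x ∈ s, HasDerivAt q (q' x) x)
    (hW : ∀ x ∈ s, q x = 0 → 0 < p x * q' x - p' x * q x) (hne : ∀ x ∈ s, p x ≠ 0) :
    {x ∈ s | q x = 0}.Subsingleton := by
  have hsub : {x ∈ s | q x / p x = 0}.Subsingleton := by
    refine subsingleton_zeros_of_deriv_pos hs
      (fun x hx ↦ (hq x hx).fun_div (hp x hx) (hne x hx)) fun x hx h ↦ ?_
    have hqx : q x = 0 := by simpa [hne x hx] using h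
    have hpx := hne x hx
    have hWx := hW x hx hqx
    exact div_pos (by linarith) (by positivity)
  exact hsub.anti fun x hx ↦ ⟨hx.1, by simp [hx.2]⟩

lemma existsUnique_zero_of_wronskian_pos (hab : a < b)
    (hp : ∀ x ∈ Icc a b, HasDerivAt p (p' x) x) (hq : ∀ x ∈ Icc a b, HasDerivAt q (q' x) x)
    (hW : ∀ x ∈ Icc a b, p x = 0 ∨ q x = 0 → 0 < p x * q' x - p' x * q x)
    (ha : p a = 0) (hb : p b = 0) (hne : ∀ x ∈ Ioo a b, p x ≠ 0) :
    ∃! x, x ∈ Ioo a b ∧ q x = 0 := by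
  obtain ⟨x, hx⟩ := exists_zero_of_wronskian_pos hab hp hq (fun x hx h ↦ hW x hx (.inl h)) ha hb
  have hIcc {y : ℝ} (hy : y ∈ Ioo a b) : y ∈ Icc a b := Ioo_subset_Icc_self hy
  have hsub : {x ∈ Ioo a b | q x = 0}.Subsingleton :=
    subsingleton_zeros_of_wronskian_pos ordConnected_Ioo (fun x hx ↦ hp x (hIcc hx))
      (fun x hx ↦ hq x (hIcc hx)) (fun x hx h ↦ hW x (hIcc hx) (.inr h)) hne
  exact ⟨x, hx, fun y hy ↦ hsub hy hx⟩

end Interlacing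

section ExponentialSeries

variable {c : ℕ → ℝ} {C : ℝ}

lemma abs_mul_pow_div_factorial_le (hc : ∀ m, |c m| ≤ C) {x R : ℝ} (hx : |x| ≤ R) (m : ℕ) :
    |c m * (x ^ m / m !)| ≤ C * (R ^ m / m !) := by
  rw [abs_mul, abs_div, abs_pow, Nat.abs_cast]
  have hC : 0 ≤ C := (abs_nonneg _).trans (hc 0)
  gcongr
  exact hc m

lemma summable_mul_pow_div_factorial (hc : ∀ m, |c m| ≤ C) (x : ℝ) :
    Summable fun m ↦ c m * (x ^ m / m !) :=
  .of_norm_bounded ((Real.summable_pow_div_factorial |x|).mul_left C)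
    (abs_mul_pow_div_factorial_le hc le_rfl)

lemma abs_tsum_mul_pow_div_factorial_le (hc : ∀ m, |c m| ≤ C) (x : ℝ) :
    |∑' m, c m * (x ^ m / m !)| ≤ C * Real.exp |x| := by
  have hexp : HasSum (fun m : ℕ ↦ C * (|x| ^ m / m !)) (C * Real.exp |x|) := by
    rw [Real.exp_eq_exp_ℝ]
    exact (NormedSpace.expSeries_div_hasSum_exp |x|).mul_left C
  exact tsum_of_norm_bounded (f := fun m ↦ c m * (x ^ m / m !)) hexp
    (abs_mul_pow_div_factorial_le hc le_rfl)

lemma hasDerivAt_pow_succ_div_factorial (m : ℕ) (x : ℝ) :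
    HasDerivAt (fun x : ℝ ↦ x ^ (m + 1) / (m + 1)!) (x ^ m / m !) x := by
  refine ((hasDerivAt_pow (m + 1) x).div_const _).congr_deriv ?_
  rw [Nat.factorial_succ, Nat.cast_mul, Nat.add_sub_cancel]
  exact mul_div_mul_left _ _ (by positivity)

lemma hasDerivAt_tsum_mul_pow_div_factorial (hc : ∀ m, |c m| ≤ C) (x : ℝ) :
    HasDerivAt (fun x ↦ ∑' m, c m * (x ^ m / m !)) (∑' m, c (m + 1) * (x ^ m / m !)) x := by
  have hsplit : (fun x ↦ ∑' m, c m * (x ^ m / m !)) =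
      fun x ↦ c 0 + ∑' m, c (m + 1) * (x ^ (m + 1) / (m + 1)!) := by
    funext x
    simpa using (summable_mul_pow_div_factorial hc x).tsum_eq_zero_add
  have hx : x ∈ Metric.ball 0 (|x| + 1) := by simp
  rw [hsplit]
  refine (hasDerivAt_tsum_of_isPreconnected
    ((Real.summable_pow_div_factorial (|x| + 1)).mul_left C) Metric.isOpen_ball
    (convex_ball (0 : ℝ) _).isPreconnected
    (fun m y _ ↦ (hasDerivAt_pow_succ_div_factorial m y).const_mul (c (m + 1)))
    (fun m y hy ↦ abs_mul_pow_div_factorial_le (fun m ↦ hc (m + 1)) ?_ m) hx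
    ((summable_nat_add_iff 1).2 (summable_mul_pow_div_factorial hc x)) hx).const_add (c 0)
  simpa using (mem_ball_zero_iff.1 hy).le

lemma hasSum_natCast_mul_pow_div_factorial (hc : ∀ m, |c m| ≤ C) (x : ℝ) :
    HasSum (fun m : ℕ ↦ m * (c m * (x ^ m / m !))) (x * ∑' m, c (m + 1) * (x ^ m / m !)) := by
  have hshift (m : ℕ) : ((m + 1 : ℕ) : ℝ) * (c (m + 1) * (x ^ (m + 1) / (m + 1)!)) =
      x * (c (m + 1) * (x ^ m / m !)) := by
    rw [Nat.factorial_succ]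
    push_cast
    field_simp
    ring
  rw [← hasSum_nat_add_iff' 1]
  simp only [hshift, Finset.sum_range_one, Nat.cast_zero, zero_mul, sub_zero]
  exact (summable_mul_pow_div_factorial (fun m ↦ hc (m + 1)) x).hasSum.mul_left x

end ExponentialSeries

lemma inv_Gamma_eq_self_mul_inv_Gamma_add_one (s : ℝ) :
    (Real.Gamma s)⁻¹ = s * (Real.Gamma (s + 1))⁻¹ := by
  rcases eq_or_ne s 0 with rfl | hs
  · simp
  · rw [Real.Gamma_add_one hs]
    field_simp

lemma abs_inv_Gamma_add_natCast_le {s : ℝ} (hs : 2 ≤ s) (m : ℕ) :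
    |(Real.Gamma (s + m))⁻¹| ≤ (Real.Gamma s)⁻¹ := by
  have hm : s ≤ s + m := le_add_of_nonneg_right m.cast_nonneg
  have hpos : 0 < Real.Gamma s := Real.Gamma_pos_of_pos (by linarith)
  have hle : Real.Gamma s ≤ Real.Gamma (s + m) :=
    Real.Gamma_strictMonoOn_Ici.monotoneOn hs (hs.trans hm) hm
  rw [abs_of_pos (inv_pos.2 (hpos.trans_le hle))]
  exact inv_anti₀ hpos hle

lemma exists_abs_inv_Gamma_add_natCast_le (s : ℝ) :
    ∃ C, ∀ m : ℕ, |(Real.Gamma (s + m))⁻¹| ≤ C := by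
  obtain ⟨N, hN⟩ := exists_nat_ge (2 - s)
  have hbdd : IsBoundedUnder (· ≤ ·) atTop fun m : ℕ ↦ |(Real.Gamma (s + m))⁻¹| := by
    refine ⟨(Real.Gamma (s + N))⁻¹, eventually_map.2 ?_⟩
    filter_upwards [eventually_ge_atTop N] with m hm
    obtain ⟨k, rfl⟩ := Nat.exists_eq_add_of_le hm
    rw [Nat.cast_add, ← add_assoc]
    exact abs_inv_Gamma_add_natCast_le (by linarith) k
  obtain ⟨C, hC⟩ := hbdd.bddAbove_range
  exact ⟨C, forall_mem_range.1 hC⟩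

/-- The Bessel–Clifford function `∑ₘ xᵐ / (m! Γ(ν + m + 1))`, an entire function of `x` for every
real order `ν`; it is `J_ν` without the factor `(z / 2) ^ ν`, in the variable `x = -(z / 2) ^ 2`.
The convention `(Γ(-n))⁻¹ = 0` gives the usual value of the reciprocal Gamma function at its
zeros. -/
noncomputable def besselClifford (ν x : ℝ) : ℝ :=
  ∑' m : ℕ, (Real.Gamma (ν + 1 + m))⁻¹ * (x ^ m / m !)

lemma besselClifford_zero_right (ν : ℝ) : besselClifford ν 0 = (Real.Gamma (ν + 1))⁻¹ := by
  rw [besselClifford, tsum_eq_single 0 fun m hm ↦ by simp [hm]]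
  simp

lemma besselClifford_add_one_eq_tsum (ν x : ℝ) :
    besselClifford (ν + 1) x =
      ∑' m : ℕ, (Real.Gamma (ν + 1 + (m + 1 : ℕ)))⁻¹ * (x ^ m / m !) := by
  refine tsum_congr fun m ↦ ?_
  rw [Nat.cast_succ, add_comm (m : ℝ), ← add_assoc (ν + 1)]

lemma hasDerivAt_besselClifford (ν x : ℝ) :
    HasDerivAt (besselClifford ν) (besselClifford (ν + 1) x) x := by
  obtain ⟨C, hC⟩ := exists_abs_inv_Gamma_add_natCast_le (ν + 1)
  rw [besselClifford_add_one_eq_tsum]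
  exact hasDerivAt_tsum_mul_pow_div_factorial hC x

lemma besselClifford_recurrence (ν x : ℝ) :
    besselClifford ν x =
      (ν + 1) * besselClifford (ν + 1) x + x * besselClifford (ν + 2) x := by
  obtain ⟨C, hC⟩ := exists_abs_inv_Gamma_add_natCast_le (ν + 1 + 1)
  have hfst := (summable_mul_pow_div_factorial hC x).hasSum.mul_left (ν + 1)
  have hsnd := hasSum_natCast_mul_pow_div_factorial hC x
  have hadd : ν + 2 = ν + 1 + 1 := by ring
  rw [hadd, besselClifford_add_one_eq_tsum (ν + 1)]
  refine Eq.trans (tsum_congr fun m ↦ ?_) (hfst.add hsnd).tsum_eq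
  rw [inv_Gamma_eq_self_mul_inv_Gamma_add_one, add_right_comm _ (m : ℝ)]
  ring

lemma abs_besselClifford_le {ν : ℝ} (hν : 1 ≤ ν) (x : ℝ) :
    |besselClifford ν x| ≤ (Real.Gamma (ν + 1))⁻¹ * Real.exp |x| :=
  abs_tsum_mul_pow_div_factorial_le (abs_inv_Gamma_add_natCast_le (by linarith)) x

lemma besselClifford_ne_zero_of_abs_mul_exp_lt {ν x : ℝ} (hν : 0 ≤ ν)
    (hx : |x| * Real.exp |x| < ν + 1) :
    besselClifford ν x ≠ 0 := by
  intro hzero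
  have hΓ : 0 < (Real.Gamma (ν + 1 + 1))⁻¹ := inv_pos.2 (Real.Gamma_pos_of_pos (by linarith))
  have hbound : |besselClifford ν 0 - besselClifford ν x| ≤
      (Real.Gamma (ν + 1 + 1))⁻¹ * Real.exp |x| * |0 - x| := by
    refine (convex_closedBall (0 : ℝ) |x|).norm_image_sub_le_of_norm_hasDerivWithin_le
      (fun y _ ↦ (hasDerivAt_besselClifford ν y).hasDerivWithinAt) (fun y hy ↦ ?_)
      (by simp) (by simp)
    refine (abs_besselClifford_le (by linarith) y).trans ?_
    exact mul_le_mul_of_nonneg_left (Real.exp_le_exp.2 (by simpa using hy)) hΓ.le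
  rw [hzero, besselClifford_zero_right, inv_Gamma_eq_self_mul_inv_Gamma_add_one, sub_zero, zero_sub,
    abs_neg, abs_of_nonneg (by positivity)] at hbound
  nlinarith

lemma besselClifford_add_one_ne_zero_of_eq_zero {ν x : ℝ} (hx : x ≠ 0)
    (hzero : besselClifford ν x = 0) :
    besselClifford (ν + 1) x ≠ 0 := by
  intro hzero'
  have hall (n : ℕ) : besselClifford (ν + n) x = 0 ∧ besselClifford (ν + n + 1) x = 0 := by
    induction n with
    | zero => simpa using ⟨hzero, hzero'⟩
    | succ n ih =>
      have hrec := besselClifford_recurrence (ν + n) x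
      rw [ih.1, ih.2, mul_zero, zero_add, eq_comm, mul_eq_zero_iff_left hx] at hrec
      rw [Nat.cast_succ, ← add_assoc, add_assoc _ 1 1, one_add_one_eq_two]
      exact ⟨ih.2, hrec⟩
  obtain ⟨n, hn⟩ := exists_nat_gt (|x| * Real.exp |x| + |ν|)
  have hν := neg_abs_le ν
  have hpos : 0 ≤ |x| * Real.exp |x| := by positivity
  exact besselClifford_ne_zero_of_abs_mul_exp_lt (by linarith) (by linarith) (hall n).1

lemma besselJ_eq_rpow_mul_besselClifford (ν : ℝ) {z : ℝ} (hz : 0 < z) :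
    besselJ ν z = (z / 2) ^ ν * besselClifford ν (-(z / 2) ^ 2) := by
  rw [besselJ, besselClifford, ← tsum_mul_left]
  refine tsum_congr fun m ↦ ?_
  have hpow : (z / 2) ^ (ν + 2 * (m : ℝ)) = (z / 2) ^ ν * ((z / 2) ^ 2) ^ m := by
    rw [Real.rpow_add (half_pos hz), ← pow_mul]
    exact_mod_cast rfl
  rw [hpow, neg_pow ((z / 2) ^ 2), add_right_comm ν]
  ring

lemma besselJ_eq_zero_iff {ν z : ℝ} (hz : 0 < z) :
    besselJ ν z = 0 ↔ besselClifford ν (-(z / 2) ^ 2) = 0 := by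
  simp [besselJ_eq_rpow_mul_besselClifford ν hz, (Real.rpow_pos_of_pos (half_pos hz) ν).ne']

lemma hasDerivAt_besselJ (ν : ℝ) {z : ℝ} (hz : 0 < z) :
    HasDerivAt (besselJ ν) (ν / z * besselJ ν z - besselJ (ν + 1) z) z := by
  have hz2 : z / 2 ≠ 0 := (half_pos hz).ne'
  have hhalf : HasDerivAt (fun z : ℝ ↦ z / 2) (1 / 2) z := (hasDerivAt_id z).div_const 2
  have hprod := (hhalf.rpow_const (p := ν) (.inl hz2)).fun_mul
    ((hasDerivAt_besselClifford ν (-(z / 2) ^ 2)).comp z (hhalf.fun_pow 2).fun_neg)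
  have heq : besselJ ν =ᶠ[𝓝 z] fun z ↦ (z / 2) ^ ν * besselClifford ν (-(z / 2) ^ 2) :=
    (eventually_gt_nhds hz).mono fun w hw ↦ besselJ_eq_rpow_mul_besselClifford ν hw
  refine (hprod.congr_of_eventuallyEq heq).congr_deriv ?_
  rw [besselJ_eq_rpow_mul_besselClifford ν hz, besselJ_eq_rpow_mul_besselClifford (ν + 1) hz,
    Real.rpow_add_one hz2, Real.rpow_sub_one hz2]
  simp only [Function.comp_apply, Nat.cast_ofNat, Nat.add_one_sub_one, pow_one]
  field_simp
  ring

lemma besselJ_add_two (ν : ℝ) {z : ℝ} (hz : 0 < z) :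
    besselJ (ν + 2) z = 2 * (ν + 1) / z * besselJ (ν + 1) z - besselJ ν z := by
  have hz2 : z / 2 ≠ 0 := (half_pos hz).ne'
  simp only [besselJ_eq_rpow_mul_besselClifford _ hz]
  rw [besselClifford_recurrence ν, Real.rpow_add_one hz2, Real.rpow_add (half_pos hz),
    Real.rpow_two]
  field_simp
  ring

lemma hasDerivAt_besselJ_add_one (ν : ℝ) {z : ℝ} (hz : 0 < z) :
    HasDerivAt (besselJ (ν + 1)) (besselJ ν z - (ν + 1) / z * besselJ (ν + 1) z) z := by
  refine (hasDerivAt_besselJ (ν + 1) hz).congr_deriv ?_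
  rw [add_assoc, one_add_one_eq_two, besselJ_add_two ν hz]
  ring

lemma besselJ_add_one_ne_zero_of_eq_zero {ν z : ℝ} (hz : 0 < z) (hzero : besselJ ν z = 0) :
    besselJ (ν + 1) z ≠ 0 := by
  rw [besselJ_eq_zero_iff hz] at hzero
  rw [Ne, besselJ_eq_zero_iff hz]
  exact besselClifford_add_one_ne_zero_of_eq_zero (by simpa using hz.ne') hzero

lemma besselJ_wronskian_pos {ν z : ℝ} (hν : -1 / 2 ≤ ν) (hz : 0 < z)
    (hzero : besselJ ν z = 0 ∨ besselJ ν z + besselJ (ν + 1) z = 0) :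
    0 < besselJ ν z ^ 2 + besselJ (ν + 1) z ^ 2 -
      (2 * ν + 1) / z * (besselJ ν z * besselJ (ν + 1) z) := by
  rcases hzero with hJ | hsum
  · have hK := besselJ_add_one_ne_zero_of_eq_zero hz hJ
    rw [hJ]
    simp only [zero_mul, mul_zero, sub_zero]
    positivity
  · have hK : besselJ (ν + 1) z = -besselJ ν z := by linarith
    have hJ : besselJ ν z ≠ 0 := fun hJ ↦
      besselJ_add_one_ne_zero_of_eq_zero hz hJ (by simp [hK, hJ])
    have hcoeff : 0 ≤ (2 * ν + 1) / z := div_nonneg (by linarith) hz.le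
    calc 0 < (2 + (2 * ν + 1) / z) * besselJ ν z ^ 2 := by positivity
      _ = _ := by rw [hK]; ring

theorem stmt10_general (ν : ℝ) (hν : 1 / 2 ≤ ν) :
    (∀ a b : ℝ, 0 < a → a < b → besselJ (ν - 1) a = 0 → besselJ (ν - 1) b = 0 →
      (∀ z : ℝ, a < z → z < b → besselJ (ν - 1) z ≠ 0) →
      ∃! z : ℝ, z ∈ Set.Ioo a b ∧ besselJ (ν - 1) z + besselJ ν z = 0) ∧
    (∀ a b : ℝ, 0 < a → a < b →
      besselJ (ν - 1) a + besselJ ν a = 0 → besselJ (ν - 1) b + besselJ ν b = 0 →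
      (∀ z : ℝ, a < z → z < b → besselJ (ν - 1) z + besselJ ν z ≠ 0) →
      ∃! z : ℝ, z ∈ Set.Ioo a b ∧ besselJ (ν - 1) z = 0) := by
  obtain ⟨μ, rfl⟩ : ∃ μ, ν = μ + 1 := ⟨ν - 1, by ring⟩
  have hμ : -1 / 2 ≤ μ := by linarith
  rw [add_sub_cancel_right]
  have hJ (z : ℝ) (hz : 0 < z) := hasDerivAt_besselJ μ hz
  have hS (z : ℝ) (hz : 0 < z) := (hJ z hz).fun_add (hasDerivAt_besselJ_add_one μ hz)
  constructor
  · intro a b ha hab hJa hJb hne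
    have hpos (z : ℝ) (hz : z ∈ Icc a b) : 0 < z := ha.trans_le hz.1
    refine existsUnique_zero_of_wronskian_pos hab (fun z hz ↦ hJ z (hpos z hz))
      (fun z hz ↦ hS z (hpos z hz)) (fun z hz hzero ↦ ?_) hJa hJb fun z hz ↦ hne z hz.1 hz.2
    exact (besselJ_wronskian_pos hμ (hpos z hz) hzero).trans_eq (by ring)
  · intro a b ha hab hSa hSb hne
    have hpos (z : ℝ) (hz : z ∈ Icc a b) : 0 < z := ha.trans_le hz.1
    simp only [← neg_eq_zero (a := besselJ μ _)]
    refine existsUnique_zero_of_wronskian_pos hab (fun z hz ↦ hS z (hpos z hz))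
      (fun z hz ↦ (hJ z (hpos z hz)).fun_neg) (fun z hz hzero ↦ ?_) hSa hSb
      fun z hz ↦ hne z hz.1 hz.2
    rw [neg_eq_zero, or_comm] at hzero
    exact (besselJ_wronskian_pos hμ (hpos z hz) hzero).trans_eq (by ring)

/-- For `ν ≥ 1`, between two consecutive positive zeroes of `J_{ν−1}` there is
exactly one zero of `J_{ν−1} + J_ν`, and conversely. -/
theorem stmt10 (ν : ℝ) (hν : 1 ≤ ν) :
    (∀ a b : ℝ, 0 < a → a < b → besselJ (ν - 1) a = 0 → besselJ (ν - 1) b = 0 →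
      (∀ z : ℝ, a < z → z < b → besselJ (ν - 1) z ≠ 0) →
      ∃! z : ℝ, z ∈ Set.Ioo a b ∧ besselJ (ν - 1) z + besselJ ν z = 0) ∧
    (∀ a b : ℝ, 0 < a → a < b →
      besselJ (ν - 1) a + besselJ ν a = 0 → besselJ (ν - 1) b + besselJ ν b = 0 →
      (∀ z : ℝ, a < z → z < b → besselJ (ν - 1) z + besselJ ν z ≠ 0) →
      ∃! z : ℝ, z ∈ Set.Ioo a b ∧ besselJ (ν - 1) z = 0) :=
  stmt10_general ν (by linarith)
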